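/- arXiv:2402.15167 — 2 statements merged into one kernel-verified Lean document; each statement's English description precedes it below -/
import Mathlib

section
/- Fix integers N ≥ 2, d ≥ 1 and let K be any integer with K ≥ dN + 1. Let μ be the uniform (normalized surface) probability measure on the unit sphere S^{d−1} = {y ∈ ℝ^d : ‖y‖ = 1}. If y_1, …, y_K are drawn independently from μ, then with probability 1 (i.e., for μ^{⊗K}-almost every (y_1, …, y_K)) one has ⋂_{k=1}^{K} {X ∈ (ℝ^d)^N : f̃_{y_k}(X) = 0} = Ω. -/
/-!
If every `f̃_{y_k}` vanishes at `X`, each `k` selects a pair `s k = (i, j)`, `i ≠ j`, with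
`y_k ⟂ X_i − X_j`. There are finitely many selections `s`, so it suffices to fix one and show that
almost surely every solution `X` of these `K` linear equations lies in `Ω`.

Impose the equations one at a time, keeping track of the solution space `W`, which starts out as the
whole space, of dimension `dN`. If all `X ∈ W` satisfy `X_i = X_j` for the current pair, every
solution is in `Ω`. Otherwise some `X ∈ W` has `X_i ≠ X_j`, and since a hyperplane section of the
sphere is a null set, almost every `y` satisfies `yᵀ(X_i − X_j) ≠ 0`, so the dimension of `W` drops.
It cannot drop `dN + 1` times. This is the induction of `ae_solutions_mem_intrinsicZero`. Its use of
Fubini needs measurability of the exceptional set, which is a projection; it is `σ`-compact because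
the complement of `Ω` is open (`measurableSet_fst_image`).
-/

/-- `f̃_y(X) = ∏_{i<j} yᵀ(X_i − X_j)`, with points in `EuclideanSpace ℝ (Fin d)`. -/
noncomputable def ftilde (N d : ℕ) (y : EuclideanSpace ℝ (Fin d))
    (X : Fin N → EuclideanSpace ℝ (Fin d)) : ℝ :=
  ∏ i : Fin N, ∏ j ∈ Finset.Ioi i, (∑ l : Fin d, y l * (X i l - X j l))

/-- The intrinsic zero set `Ω`. -/
def intrinsicZero (N d : ℕ) : Set (Fin N → EuclideanSpace ℝ (Fin d)) :=
  {X | ∃ i j : Fin N, i ≠ j ∧ X i = X j}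

open MeasureTheory Metric

/-- The linear form `X ↦ yᵀ(X_i − X_j)` on configurations. -/
noncomputable def pairForm (N d : ℕ) (y : EuclideanSpace ℝ (Fin d)) (p : Fin N × Fin N) :
    (Fin N → EuclideanSpace ℝ (Fin d)) →ₗ[ℝ] ℝ where
  toFun X := ∑ l : Fin d, y l * (X p.1 l - X p.2 l)
  map_add' X Y := by
    rw [← Finset.sum_add_distrib]
    refine Finset.sum_congr rfl fun l _ => ?_
    simp only [Pi.add_apply, PiLp.add_apply]
    ring
  map_smul' c X := by
    simp only [Pi.smul_apply, PiLp.smul_apply, smul_eq_mul, RingHom.id_apply, Finset.mul_sum]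
    refine Finset.sum_congr rfl fun l _ => ?_
    ring

lemma pairForm_apply (N d : ℕ) (y : EuclideanSpace ℝ (Fin d)) (p : Fin N × Fin N)
    (X : Fin N → EuclideanSpace ℝ (Fin d)) :
    pairForm N d y p X = ∑ l : Fin d, y l * (X p.1 l - X p.2 l) := rfl

/-- The section of the unit sphere by a hyperplane through the origin is a null set: the cone over it
lies in the hyperplane. -/
lemma ae_toSphere_sum_ne_zero (d : ℕ) (v : EuclideanSpace ℝ (Fin d)) (hv : v ≠ 0) :
    ∀ᵐ y : sphere (0 : EuclideanSpace ℝ (Fin d)) 1 ∂((volume : Measure (EuclideanSpace ℝ (Fin d))).toSphere),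
      (∑ l : Fin d, (y : EuclideanSpace ℝ (Fin d)) l * v l) ≠ 0 := by
  have hsum : ∀ y : EuclideanSpace ℝ (Fin d), ∑ l : Fin d, y l * v l = inner ℝ v y := by
    intro y
    simp [PiLp.inner_apply]
  simp only [hsum]
  rw [ae_iff]
  simp only [ne_eq, not_not]
  have hmeas : MeasurableSet {y : sphere (0 : EuclideanSpace ℝ (Fin d)) 1 |
      inner ℝ v (y : EuclideanSpace ℝ (Fin d)) = 0} :=
    (isClosed_eq (by fun_prop) continuous_const).measurableSet
  rw [Measure.toSphere_apply' _ hmeas]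
  have hnull : volume ((LinearMap.ker (innerₛₗ ℝ v) : Submodule ℝ (EuclideanSpace ℝ (Fin d))) :
      Set (EuclideanSpace ℝ (Fin d))) = 0 := by
    apply Measure.addHaar_submodule
    intro h
    have hmem : v ∈ LinearMap.ker (innerₛₗ ℝ v) := h ▸ Submodule.mem_top
    exact hv (by simpa using hmem)
  rw [measure_mono_null _ hnull, mul_zero]
  rintro _ ⟨r, -, _, ⟨y, hy, rfl⟩, rfl⟩
  have hy' : inner ℝ v (y : EuclideanSpace ℝ (Fin d)) = 0 := hy
  simp [hy']

/-- The projection of a locally closed set along a `σ`-compact metric factor, from a compact base, is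
a countable union of compact sets. -/
lemma measurableSet_fst_image {A B : Type*} [TopologicalSpace A] [CompactSpace A] [T2Space A]
    [MeasurableSpace A] [BorelSpace A] [PseudoMetricSpace B] [SigmaCompactSpace B]
    {C : Set (A × B)} (hC : IsClosed C) {U : Set B} (hU : IsOpen U) :
    MeasurableSet {a : A | ∃ b ∈ U, (a, b) ∈ C} := by
  obtain ⟨F, hF, -, rfl, -⟩ := hU.exists_iUnion_isClosed
  have heq : {a : A | ∃ b ∈ ⋃ n, F n, (a, b) ∈ C}
      = ⋃ n, ⋃ m, Prod.fst '' (C ∩ (Set.univ ×ˢ (F n ∩ compactCovering B m))) := by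
    ext a
    simp only [Set.mem_ofPred_eq, Set.mem_iUnion, Set.mem_image, Set.mem_inter_iff, Set.mem_prod,
      Set.mem_univ, true_and, Prod.exists, exists_and_right, exists_eq_right]
    constructor
    · rintro ⟨b, ⟨n, hn⟩, hb⟩
      obtain ⟨m, hm⟩ := exists_mem_compactCovering b
      exact ⟨n, m, b, hb, hn, hm⟩
    · rintro ⟨n, m, b, hb, hn, hm⟩
      exact ⟨b, ⟨n, hn⟩, hb⟩
  rw [heq]
  refine MeasurableSet.iUnion fun n => MeasurableSet.iUnion fun m => IsCompact.measurableSet ?_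
  refine IsCompact.image ?_ continuous_fst
  exact (isCompact_univ.prod ((isCompact_compactCovering B m).inter_left (hF n))).inter_left hC

lemma isOpen_compl_intrinsicZero (N d : ℕ) : IsOpen (intrinsicZero N d)ᶜ := by
  have heq : intrinsicZero N d = ⋃ i : Fin N, ⋃ j : Fin N, ⋃ _ : i ≠ j,
      {X | X i = X j} := by
    ext X
    simp [intrinsicZero]
  rw [heq, isOpen_compl_iff]
  exact isClosed_iUnion_of_finite fun i => isClosed_iUnion_of_finite fun j =>
    isClosed_iUnion_of_finite fun _ => isClosed_eq (continuous_apply i) (continuous_apply j)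

/-- Measurability, in the directions `y`, of the existence of a solution in `W` outside `Ω`. -/
lemma measurableSet_bad (N d K : ℕ) (s : Fin K → Fin N × Fin N)
    (W : Submodule ℝ (Fin N → EuclideanSpace ℝ (Fin d))) :
    MeasurableSet {y : Fin K → sphere (0 : EuclideanSpace ℝ (Fin d)) 1 |
      ∃ X ∈ (intrinsicZero N d)ᶜ, X ∈ W ∧ ∀ k, pairForm N d (y k) (s k) X = 0} := by
  refine measurableSet_fst_image
    (C := {q : (Fin K → sphere (0 : EuclideanSpace ℝ (Fin d)) 1) × _ |
      q.2 ∈ W ∧ ∀ k, pairForm N d (q.1 k) (s k) q.2 = 0}) ?_ (isOpen_compl_intrinsicZero N d)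
  have hW : IsClosed {q : (Fin K → sphere (0 : EuclideanSpace ℝ (Fin d)) 1) ×
      (Fin N → EuclideanSpace ℝ (Fin d)) | q.2 ∈ W} :=
    W.closed_of_finiteDimensional.preimage continuous_snd
  have hEq : IsClosed {q : (Fin K → sphere (0 : EuclideanSpace ℝ (Fin d)) 1) ×
      (Fin N → EuclideanSpace ℝ (Fin d)) | ∀ k, pairForm N d (q.1 k) (s k) q.2 = 0} := by
    rw [Set.ofPred_forall]
    refine isClosed_iInter fun k => ?_
    simp only [pairForm_apply]
    exact isClosed_eq (by fun_prop) continuous_const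
  exact hW.inter hEq

/-- A fixed selection `s` of pairs: almost surely, all solutions in a space `W` of dimension less than
the number of equations lie in `Ω`. -/
lemma ae_solutions_mem_intrinsicZero (N d : ℕ)
    (μ : Measure (sphere (0 : EuclideanSpace ℝ (Fin d)) 1)) [IsFiniteMeasure μ]
    (hμ : ∀ v : EuclideanSpace ℝ (Fin d), v ≠ 0 →
      ∀ᵐ y : sphere (0 : EuclideanSpace ℝ (Fin d)) 1 ∂μ,
        (∑ l : Fin d, (y : EuclideanSpace ℝ (Fin d)) l * v l) ≠ 0)
    (K : ℕ) : ∀ (s : Fin K → Fin N × Fin N) (_ : ∀ k, (s k).1 ≠ (s k).2)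
    (W : Submodule ℝ (Fin N → EuclideanSpace ℝ (Fin d))) (_ : Module.finrank ℝ W < K),
    ∀ᵐ y ∂(Measure.pi fun _ : Fin K => μ),
      ¬ ∃ X ∈ (intrinsicZero N d)ᶜ, X ∈ W ∧ ∀ k, pairForm N d (y k) (s k) X = 0 := by
  induction K with
  | zero => intro s _ W hW; omega
  | succ K ih =>
    intro s hs W hW
    by_cases hdeg : ∀ X ∈ W, X (s 0).1 = X (s 0).2
    · refine Filter.Eventually.of_forall fun y => ?_
      rintro ⟨X, hX, hXW, -⟩
      exact hX ⟨_, _, hs 0, hdeg X hXW⟩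
    push Not at hdeg
    obtain ⟨X₀, hX₀W, hX₀⟩ := hdeg
    have hmp := (measurePreserving_piFinSuccAbove (fun _ : Fin (K + 1) => μ) 0).symm
    have hmeas : MeasurableSet {y : Fin (K + 1) → sphere (0 : EuclideanSpace ℝ (Fin d)) 1 |
        ¬ ∃ X ∈ (intrinsicZero N d)ᶜ, X ∈ W ∧ ∀ k, pairForm N d (y k) (s k) X = 0} :=
      (measurableSet_bad N d (K + 1) s W).compl
    rw [← hmp.map_eq, ae_map_iff hmp.measurable.aemeasurable hmeas]
    refine (Measure.ae_prod_iff_ae_ae (hmp.measurable hmeas)).2 ?_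
    filter_upwards [hμ (X₀ (s 0).1 - X₀ (s 0).2) (sub_ne_zero.2 hX₀)] with y₀ hy₀
    have hlt : W ⊓ LinearMap.ker (pairForm N d y₀ (s 0)) < W := by
      refine lt_of_le_of_ne inf_le_left fun h => hy₀ ?_
      rw [← h] at hX₀W
      simpa [pairForm_apply] using hX₀W.2
    have hfin := Submodule.finrank_lt_finrank_of_lt hlt
    filter_upwards [ih (fun k => s k.succ) (fun k => hs _)
      (W ⊓ LinearMap.ker (pairForm N d y₀ (s 0))) (by omega)] with y' hy'
    rintro ⟨X, hX, hXW, hXk⟩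
    refine hy' ⟨X, hX, ⟨hXW, ?_⟩, fun k => ?_⟩
    · simpa [MeasurableEquiv.piFinSuccAbove] using hXk 0
    · simpa [MeasurableEquiv.piFinSuccAbove] using hXk k.succ

open MeasureTheory in
theorem stmt_2 (N d K : ℕ) (hN : 2 ≤ N) (hd : 1 ≤ d) (hK : d * N + 1 ≤ K)
    -- `μ` is the uniform (normalized surface) probability measure on the unit sphere
    (μ : Measure (Metric.sphere (0 : EuclideanSpace ℝ (Fin d)) 1))
    (hμ : μ = (((volume : Measure (EuclideanSpace ℝ (Fin d))).toSphere) Set.univ)⁻¹ • (volume : Measure (EuclideanSpace ℝ (Fin d))).toSphere) :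
    ∀ᵐ y ∂ (Measure.pi fun _ : Fin K => μ),
      (⋂ k : Fin K,
        {X : Fin N → EuclideanSpace ℝ (Fin d) | ftilde N d (y k : EuclideanSpace ℝ (Fin d)) X = 0})
        = intrinsicZero N d := by
  have hne : (volume : Measure (EuclideanSpace ℝ (Fin d))).toSphere Set.univ ≠ 0 := by
    rw [Ne, Measure.measure_univ_eq_zero, Measure.toSphere_eq_zero_iff_finrank]
    simp
    omega
  have hfinite : IsFiniteMeasure μ := by
    rw [hμ]
    exact Measure.smul_finite _ (ENNReal.inv_ne_top.2 hne)
  have hae : ∀ v : EuclideanSpace ℝ (Fin d), v ≠ 0 →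
      ∀ᵐ y : sphere (0 : EuclideanSpace ℝ (Fin d)) 1 ∂μ,
        (∑ l : Fin d, (y : EuclideanSpace ℝ (Fin d)) l * v l) ≠ 0 := by
    intro v hv
    rw [hμ]
    exact Measure.ae_smul_measure (ae_toSphere_sum_ne_zero d v hv) _
  have hrank : Module.finrank ℝ (⊤ : Submodule ℝ (Fin N → EuclideanSpace ℝ (Fin d))) < K := by
    rw [finrank_top, Module.finrank_pi_fintype]
    simp only [finrank_euclideanSpace, Fintype.card_fin, Finset.sum_const, Finset.card_univ,
      smul_eq_mul]
    rw [mul_comm]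
    omega
  have hall : ∀ᵐ y ∂(Measure.pi fun _ : Fin K => μ), ∀ s : Fin K → Fin N × Fin N,
      (∀ k, (s k).1 ≠ (s k).2) →
      ¬ ∃ X ∈ (intrinsicZero N d)ᶜ, X ∈ (⊤ : Submodule ℝ (Fin N → EuclideanSpace ℝ (Fin d))) ∧
        ∀ k, pairForm N d (y k) (s k) X = 0 := by
    rw [ae_all_iff]
    intro s
    by_cases hs : ∀ k, (s k).1 ≠ (s k).2
    · filter_upwards [ae_solutions_mem_intrinsicZero N d μ hae K s hs ⊤ hrank] with y hy _
      exact hy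
    · exact Filter.Eventually.of_forall fun y h => absurd h hs
  filter_upwards [hall] with y hy
  ext X
  simp only [Set.mem_iInter, Set.mem_ofPred_eq]
  constructor
  · intro hX
    by_contra hXΩ
    have hpair : ∀ k, ∃ p : Fin N × Fin N, p.1 ≠ p.2 ∧ pairForm N d (y k) p X = 0 := by
      intro k
      obtain ⟨i, -, hi⟩ := Finset.prod_eq_zero_iff.1 (hX k)
      obtain ⟨j, hj, hij⟩ := Finset.prod_eq_zero_iff.1 hi
      exact ⟨(i, j), (Finset.mem_Ioi.1 hj).ne, hij⟩
    choose s hs hs0 using hpair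
    exact hy s hs ⟨X, hXΩ, Submodule.mem_top, hs0⟩
  · rintro ⟨i, j, hij, hXij⟩ k
    rcases lt_or_gt_of_ne hij with h | h
    · exact Finset.prod_eq_zero (Finset.mem_univ i)
        (Finset.prod_eq_zero (Finset.mem_Ioi.2 h) (by simp [hXij]))
    · exact Finset.prod_eq_zero (Finset.mem_univ j)
        (Finset.prod_eq_zero (Finset.mem_Ioi.2 h) (by simp [hXij]))
end

section
/- Fix integers N ≥ 2, d ≥ 1, and y ∈ ℝ^d. Let Φ : (ℝ^d)^N → ℝ be continuous, anti-symmetric, and satisfy Φ(X) = 0 whenever yᵀX_i = yᵀX_j for some i ≠ j. Then there exist, for each i ∈ {1, …, N}, functions h_i : (ℝ^d)^N × {1, …, N} → ℝ such that: (a) for each fixed j, the map X ↦ h_i(X, j) is continuous; (b) for every permutation π of {1, …, N} with π(j) = j, h_i((X_{π(1)}, …, X_{π(N)}), j) = h_i((X_1, …, X_N), j); and (c) Φ(X) = det M(X), where M(X) is the N×N matrix with (j, i)-entry h_i(X, j). That is, Φ is represented by a single generalized Slater determinant with continuous entries. -/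
/-!
Write `a k = yᵀX_k`, and let `rank j` be the number of `k` with `a k < a j`. The rank of `j` depends
symmetrically on the other points, and where `a` is injective (in particular where `Φ X ≠ 0`) the
0/1 matrix `[rank j = i]` is a permutation matrix `P`, locally constant in `X`, with `det P = ±1`.
Multiply every column of `P` by `|Φ X| ^ (1/N)` and column `0` additionally by
`sign (Φ X) * det P`; the latter factor is symmetric in `X`, since `Φ` and `det P` are both
anti-symmetric. The resulting determinant is `|Φ| * sign Φ * (det P)² = Φ`. The entries are bounded
by `|Φ| ^ (1/N)`, hence continuous where `Φ = 0`; where `Φ ≠ 0` the only factor that is not locally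
constant is `|Φ| ^ (1/N)`.
-/

/-- `Φ` is anti-symmetric. -/
def IsAntisym (N d : ℕ) (Φ : (Fin N → Fin d → ℝ) → ℝ) : Prop :=
  ∀ (π : Equiv.Perm (Fin N)) (X : Fin N → Fin d → ℝ),
    Φ (fun i => X (π i)) = ((Equiv.Perm.sign π : ℤ) : ℝ) * Φ X

open Finset Filter Topology

/-- The linear functional `x ↦ yᵀx` applied to each point of a configuration. -/
def proj {N d : ℕ} (y : Fin d → ℝ) (X : Fin N → Fin d → ℝ) (k : Fin N) : ℝ :=
  ∑ l : Fin d, y l * X k l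

/-- The number of entries of `a` strictly below `a j` (so ranks start at `0`). -/
noncomputable def rk {N : ℕ} (a : Fin N → ℝ) (j : Fin N) : ℕ :=
  (univ.filter fun k => a k < a j).card

/-- The 0/1 matrix whose `(j, i)` entry says that `a j` has rank `i`. -/
noncomputable def rkMat {N : ℕ} (a : Fin N → ℝ) : Matrix (Fin N) (Fin N) ℝ :=
  Matrix.of fun j i => if rk a j = (i : ℕ) then 1 else 0

lemma rk_comp {N : ℕ} (a : Fin N → ℝ) (π : Equiv.Perm (Fin N)) (j : Fin N) :
    rk (fun m => a (π m)) j = rk a (π j) := by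
  unfold rk
  exact Finset.card_equiv π (by simp)

lemma rkMat_det_comp {N : ℕ} (a : Fin N → ℝ) (π : Equiv.Perm (Fin N)) :
    (rkMat fun m => a (π m)).det = ((Equiv.Perm.sign π : ℤ) : ℝ) * (rkMat a).det := by
  rw [← Matrix.det_permute]
  congr 1
  ext j i
  simp [rkMat, rk_comp]

lemma rk_lt {N : ℕ} (a : Fin N → ℝ) (j : Fin N) : rk a j < N := by
  have h : (univ.filter fun k => a k < a j) ⊂ univ :=
    Finset.filter_ssubset.2 ⟨j, mem_univ _, lt_irrefl _⟩
  simpa [rk] using Finset.card_lt_card h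

lemma rk_lt_rk {N : ℕ} (a : Fin N → ℝ) {i j : Fin N} (h : a i < a j) : rk a i < rk a j := by
  apply Finset.card_lt_card
  refine Finset.ssubset_iff_of_subset ?_ |>.2 ⟨i, by simpa using h, by simp⟩
  intro k hk
  simp only [mem_filter, mem_univ, true_and] at hk ⊢
  exact hk.trans h

/-- For injective `a`, `rkMat a` is a permutation matrix, so its determinant is a sign. -/
lemma abs_rkMat_det {N : ℕ} (a : Fin N → ℝ) (ha : Function.Injective a) :
    |(rkMat a).det| = 1 := by
  let f : Fin N → Fin N := fun j => ⟨rk a j, rk_lt a j⟩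
  have hf : Function.Injective f := by
    intro i j hij
    have hr : rk a i = rk a j := congrArg Fin.val hij
    rcases lt_trichotomy (a i) (a j) with h | h | h
    · exact absurd hr (rk_lt_rk a h).ne
    · exact ha h
    · exact absurd hr (rk_lt_rk a h).ne'
  let σ : Equiv.Perm (Fin N) := Equiv.ofBijective f (Finite.injective_iff_bijective.1 hf)
  have : rkMat a = (1 : Matrix (Fin N) (Fin N) ℝ).submatrix σ id := by
    ext j i
    simp [rkMat, σ, f, Matrix.one_apply, Fin.ext_iff]
  rw [this, Matrix.det_permute]
  rcases Int.units_eq_one_or (Equiv.Perm.sign σ) with h | h <;> simp [h]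

/-- The order pattern of `a` is unchanged under small perturbations when `a` is injective. -/
lemma eventually_rk_eq {N d : ℕ} (y : Fin d → ℝ) (X : Fin N → Fin d → ℝ)
    (hX : Function.Injective (proj y X)) :
    ∀ᶠ Z in 𝓝 X, rk (proj y Z) = rk (proj y X) := by
  have hc : ∀ k, Continuous fun Z : Fin N → Fin d → ℝ => proj y Z k := by
    intro k
    unfold proj
    fun_prop
  have h : ∀ k j, ∀ᶠ Z in 𝓝 X, (proj y Z k < proj y Z j ↔ proj y X k < proj y X j) := by
    intro k j
    rcases lt_trichotomy (proj y X k) (proj y X j) with h | h | h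
    · filter_upwards [(hc k).continuousAt.eventually_lt (hc j).continuousAt h] with Z hZ
      simp [h, hZ]
    · obtain rfl : k = j := hX h
      simp
    · filter_upwards [(hc j).continuousAt.eventually_lt (hc k).continuousAt h] with Z hZ
      exact iff_of_false hZ.not_gt h.not_gt
  have h' := eventually_all.2 fun k => eventually_all.2 fun j => h k j
  filter_upwards [h'] with Z hZ
  ext j
  simp only [rk, hZ]

/-- The `(j, i)` entry: `[rank j = i] * |Φ X| ^ (1/N)`, with the additional symmetric factor
`sign (Φ X) * det P` in column `0`. -/
noncomputable def entry {N d : ℕ} (y : Fin d → ℝ) (Φ : (Fin N → Fin d → ℝ) → ℝ)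
    (i : Fin N) (X : Fin N → Fin d → ℝ) (j : Fin N) : ℝ :=
  (|Φ X| ^ ((N : ℝ)⁻¹) *
    if (i : ℕ) = 0 then Real.sign (Φ X) * (rkMat (proj y X)).det else 1) *
    rkMat (proj y X) j i

theorem stmt_12 (N d : ℕ) (hN : 2 ≤ N) (hd : 1 ≤ d) (y : Fin d → ℝ)
    (Φ : (Fin N → Fin d → ℝ) → ℝ) (hΦcont : Continuous Φ) (hΦanti : IsAntisym N d Φ)
    (hΦzero : ∀ X : Fin N → Fin d → ℝ,
      (∃ i j : Fin N, i ≠ j ∧ (∑ l : Fin d, y l * X i l) = ∑ l : Fin d, y l * X j l) →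
      Φ X = 0) :
    ∃ h : Fin N → (Fin N → Fin d → ℝ) → Fin N → ℝ,
      -- (a) each entry is continuous in `X`
      (∀ i j, Continuous (fun X => h i X j)) ∧
      -- (b) each entry, as a function of `X`, is symmetric in the coordinates `X_l`, `l ≠ j`
      (∀ i j (π : Equiv.Perm (Fin N)), π j = j →
        ∀ X : Fin N → Fin d → ℝ, h i (fun m => X (π m)) j = h i X j) ∧
      -- (c) `Φ` is a single generalized Slater determinant
      (∀ X : Fin N → Fin d → ℝ,
        Φ X = Matrix.det (Matrix.of fun j i : Fin N => h i X j)) := by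
  have hN0 : (N : ℝ) ≠ 0 := by positivity
  have hinj : ∀ X, Φ X ≠ 0 → Function.Injective (proj y X) := by
    intro X hX i j hij
    by_contra hne
    exact hX (hΦzero X ⟨i, j, hne, hij⟩)
  refine ⟨entry y Φ, ?_, ?_, ?_⟩
  · intro i j
    have hpow : Continuous fun X => |Φ X| ^ ((N : ℝ)⁻¹) :=
      hΦcont.abs.rpow_const fun _ => Or.inr (by positivity)
    rw [continuous_iff_continuousAt]
    intro X
    by_cases hX : Φ X = 0
    · have hbound : ∀ Z, ‖entry y Φ i Z j‖ ≤ |Φ Z| ^ ((N : ℝ)⁻¹) := by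
        intro Z
        by_cases hZ : Φ Z = 0
        · simp [entry, hZ, hN0]
        · have hs : |Real.sign (Φ Z)| = 1 := by
            rcases Real.sign_apply_eq_of_ne_zero _ hZ with h | h <;> simp [h]
          have h1 : |if (i : ℕ) = 0 then Real.sign (Φ Z) * (rkMat (proj y Z)).det else 1| = 1 := by
            split_ifs
            · rw [abs_mul, hs, abs_rkMat_det _ (hinj Z hZ), one_mul]
            · simp
          have h2 : |rkMat (proj y Z) j i| ≤ 1 := by
            simp only [rkMat, Matrix.of_apply]
            split_ifs <;> simp
          have h3 : 0 ≤ |Φ Z| ^ ((N : ℝ)⁻¹) := by positivity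
          rw [entry, Real.norm_eq_abs, abs_mul, abs_mul, h1, mul_one, abs_of_nonneg h3]
          exact mul_le_of_le_one_right h3 h2
      have h0 : entry y Φ i X j = 0 := by simp [entry, hX, hN0]
      rw [ContinuousAt, h0]
      refine squeeze_zero_norm hbound ?_
      have := hpow.tendsto X
      simpa [hX, hN0] using this
    · have hsign : ∀ᶠ Z in 𝓝 X, Real.sign (Φ Z) = Real.sign (Φ X) := by
        rcases lt_or_gt_of_ne hX with h | h
        · filter_upwards [hΦcont.continuousAt.eventually_lt continuousAt_const h] with Z hZ
          rw [Real.sign_of_neg h, Real.sign_of_neg hZ]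
        · filter_upwards [continuousAt_const.eventually_lt hΦcont.continuousAt h] with Z hZ
          rw [Real.sign_of_pos h, Real.sign_of_pos hZ]
      have hev : (fun Z => (|Φ Z| ^ ((N : ℝ)⁻¹) *
          if (i : ℕ) = 0 then Real.sign (Φ X) * (rkMat (proj y X)).det else 1) *
          rkMat (proj y X) j i) =ᶠ[𝓝 X] fun Z => entry y Φ i Z j := by
        filter_upwards [hsign, eventually_rk_eq y X (hinj X hX)] with Z h1 h2
        have h3 : rkMat (proj y Z) = rkMat (proj y X) := by simp only [rkMat, h2]
        simp only [entry, h1, h3]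
      refine ContinuousAt.congr ?_ hev
      exact ((hpow.mul continuous_const).mul continuous_const).continuousAt
  · intro i j π hπ X
    have hp : proj y (fun m => X (π m)) = fun m => proj y X (π m) := rfl
    have hrow : rkMat (fun m => proj y X (π m)) j i = rkMat (proj y X) j i := by
      simp [rkMat, rk_comp, hπ]
    rw [entry, entry, hp, hrow, rkMat_det_comp, hΦanti π X]
    rcases Int.units_eq_one_or (Equiv.Perm.sign π) with h | h <;> simp [h, Real.sign_neg]
  · intro X
    have hdet := Matrix.det_mul_row (fun i : Fin N => |Φ X| ^ ((N : ℝ)⁻¹) *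
      if (i : ℕ) = 0 then Real.sign (Φ X) * (rkMat (proj y X)).det else 1) (rkMat (proj y X))
    simp only [entry]
    rw [hdet, Finset.prod_mul_distrib, Finset.prod_const, Finset.card_univ, Fintype.card_fin,
      Real.rpow_inv_natCast_pow (abs_nonneg _) (by omega)]
    have hprod : (∏ i : Fin N,
        if (i : ℕ) = 0 then Real.sign (Φ X) * (rkMat (proj y X)).det else 1) =
        Real.sign (Φ X) * (rkMat (proj y X)).det := by
      rw [Finset.prod_eq_single (⟨0, by omega⟩ : Fin N)]
      · simp
      · intro b _ hb
        exact if_neg fun h => hb (Fin.ext h)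
      · simp
    rw [hprod]
    by_cases hX : Φ X = 0
    · simp [hX]
    · have hsq : (rkMat (proj y X)).det * (rkMat (proj y X)).det = 1 := by
        rw [← abs_mul_abs_self, abs_rkMat_det _ (hinj X hX), one_mul]
      have hsa : |Φ X| * Real.sign (Φ X) = Φ X := by
        rcases lt_or_gt_of_ne hX with h | h
        · rw [Real.sign_of_neg h, abs_of_neg h]; ring
        · rw [Real.sign_of_pos h, abs_of_pos h]; ring
      calc Φ X = |Φ X| * Real.sign (Φ X) *
            ((rkMat (proj y X)).det * (rkMat (proj y X)).det) := by rw [hsq, hsa, mul_one]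
        _ = _ := by ring
end
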